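/- Let φ = (1+√5)/2 and let B be the 3×3 matrix with rows (−1, 1, 1), (1, φ⁻², φ²), (1, φ², φ⁻²). Then B maps the cone 𝒬₀ bijectively onto the cone 𝒬: for (x,y,z) = B·(u,v,w) one has the identity x² + y² + z² − 2(xy + yz + zx) = 5(u² − 4vw), and (x,y,z) ∈ 𝒬 if and only if (u,v,w) ∈ 𝒬₀. Consequently, for every ξ ∈ ℝ with ξ ≠ −φ⁻¹ and ξ ≠ φ, the matrix M(ξ, −ξ, 2−ξ) maps 𝒬 onto 𝒬: M(ξ, −ξ, 2−ξ)·𝒬 = 𝒬. -/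

import Mathlib

/-!
The entries of `B` other than `±1` are `φ² = φ + 1` and `φ⁻² = 2 - φ`, so the identity between the
two quadratic forms follows from `φ² = φ + 1` alone.  Given the identity, the quadratic inequalities defining `𝒬`
and `𝒬₀` are equivalent, and only the choice of nappe remains.  If `4vw > u²`, then `v` and `w` have
the same sign, which is that of `2x + y + z = 5(v + w)`; conversely, if `v, w > 0`, each of `x, y, z`
is of the form `av + bw ± u` with `a, b > 0` and `ab = 1`, hence positive by the AM-GM inequality.
An explicit inverse of `B` turns the equivalence into `B 𝒬₀ = 𝒬`.

The columns of `B` are eigenvectors of `M(ξ, -ξ, 2 - ξ)`: one has `M B = B D` with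
`D = diag(cd, c², d²)`, where `c = ξ - φ` and `d = ξ + φ⁻¹`.  If `c, d ≠ 0`, then `D` maps `𝒬₀` onto
itself, and therefore `M` maps `𝒬 = B 𝒬₀` onto itself.
-/

/-- The open cone: the interior, in the first octant, of the cone
`x² + y² + z² = 2(xy + yz + zx)`, as a set of vectors in `Fin 3 → ℝ`. -/
def Q : Set (Fin 3 → ℝ) :=
  {v | 0 < v 0 ∧ 0 < v 1 ∧ 0 < v 2 ∧
    (v 0) ^ 2 + (v 1) ^ 2 + (v 2) ^ 2 <
      2 * (v 0 * v 1 + v 1 * v 2 + v 2 * v 0)}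

/-- The auxiliary cone `𝒬₀`. -/
def Q0 : Set (Fin 3 → ℝ) :=
  {v | 0 < v 1 ∧ 0 < v 2 ∧ (v 0) ^ 2 < 4 * (v 1 * v 2)}

/-- The matrix `M(ρ, σ, τ)`. -/
def M (ρ σ τ : ℝ) : Matrix (Fin 3) (Fin 3) ℝ :=
  !![ρ * (ρ - 1), ρ, 1 - ρ;
     1 - σ, σ * (σ - 1), σ;
     τ, 1 - τ, τ * (τ - 1)]

/-- The golden ratio. -/
noncomputable def phi : ℝ := (1 + Real.sqrt 5) / 2

/-- The diagonalizing matrix `B`. -/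
noncomputable def B : Matrix (Fin 3) (Fin 3) ℝ :=
  !![-1, 1, 1;
     1, (phi ^ 2)⁻¹, phi ^ 2;
     1, phi ^ 2, (phi ^ 2)⁻¹]

lemma phi_sq : phi ^ 2 = phi + 1 := by
  have h : Real.sqrt 5 ^ 2 = 5 := Real.sq_sqrt (by norm_num)
  unfold phi
  linear_combination h / 4

lemma phi_gt_one : 1 < phi := by
  have h : (1 : ℝ) < Real.sqrt 5 := Real.lt_sqrt_of_sq_lt (by norm_num)
  unfold phi
  linarith

lemma phi_lt_two : phi < 2 := by
  nlinarith [phi_sq, phi_gt_one]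

lemma phi_inv : phi⁻¹ = phi - 1 := by
  have h : phi ≠ 0 := by linarith [phi_gt_one]
  field_simp
  linear_combination -phi_sq

lemma phi_sq_inv : (phi ^ 2)⁻¹ = 2 - phi := by
  rw [← inv_pow, phi_inv]
  linear_combination phi_sq

lemma B_mulVec (u : Fin 3 → ℝ) :
    B.mulVec u = ![-u 0 + u 1 + u 2, u 0 + (2 - phi) * u 1 + (phi + 1) * u 2,
      u 0 + (phi + 1) * u 1 + (2 - phi) * u 2] := by
  have h : (phi + 1)⁻¹ = 2 - phi := by rw [← phi_sq, phi_sq_inv]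
  ext i
  fin_cases i <;>
    simp [B, h, phi_sq, Matrix.mulVec, dotProduct, Fin.sum_univ_three]

lemma B_identity (u : Fin 3 → ℝ) :
    (B.mulVec u 0) ^ 2 + (B.mulVec u 1) ^ 2 + (B.mulVec u 2) ^ 2 -
        2 * (B.mulVec u 0 * B.mulVec u 1 + B.mulVec u 1 * B.mulVec u 2 +
          B.mulVec u 2 * B.mulVec u 0) =
      5 * ((u 0) ^ 2 - 4 * (u 1 * u 2)) := by
  simp only [B_mulVec, Matrix.cons_val]
  linear_combination (4 * (u 1 - u 2) ^ 2) * phi_sq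

/-- AM-GM in the form `|u| < 2√(vw) ≤ av + bw` for `ab = 1`. -/
lemma abs_lt_of_sq_lt_four_mul {a b u v w : ℝ} (ha : 0 < a) (hb : 0 < b) (hab : a * b = 1)
    (hv : 0 < v) (hw : 0 < w) (h : u ^ 2 < 4 * (v * w)) : |u| < a * v + b * w := by
  refine abs_lt_of_sq_lt_sq ?_ (by positivity)
  have h4 : (a * v + b * w) ^ 2 = (a * v - b * w) ^ 2 + 4 * (v * w) := by
    linear_combination 4 * v * w * hab
  linarith [sq_nonneg (a * v - b * w)]

lemma B_mulVec_mem_Q_iff (u : Fin 3 → ℝ) : B.mulVec u ∈ Q ↔ u ∈ Q0 := by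
  have hid := B_identity u
  have hq : (B.mulVec u 0) ^ 2 + (B.mulVec u 1) ^ 2 + (B.mulVec u 2) ^ 2 <
      2 * (B.mulVec u 0 * B.mulVec u 1 + B.mulVec u 1 * B.mulVec u 2 +
        B.mulVec u 2 * B.mulVec u 0) ↔ (u 0) ^ 2 < 4 * (u 1 * u 2) := by
    constructor <;> intro h <;> linarith
  simp only [Q, Q0, Set.mem_ofPred_eq, hq]
  simp only [B_mulVec, Matrix.cons_val]
  constructor
  · rintro ⟨hx, hy, hz, h⟩
    -- `2x + y + z = 5(v + w)`
    have hs : 0 < u 1 + u 2 := by linarith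
    have hp : 0 < u 1 * u 2 := by nlinarith [sq_nonneg (u 0)]
    rcases pos_and_pos_or_neg_and_neg_of_mul_pos hp with ⟨h1, h2⟩ | ⟨h1, h2⟩
    · exact ⟨h1, h2, h⟩
    · linarith
  · rintro ⟨hv, hw, h⟩
    have ha : 0 < 2 - phi := by linarith [phi_lt_two]
    have hb : 0 < phi + 1 := by linarith [phi_gt_one]
    have hab : (2 - phi) * (phi + 1) = 1 := by linear_combination -phi_sq
    have h0 := abs_lt.1 (abs_lt_of_sq_lt_four_mul one_pos one_pos (one_mul 1) hv hw h)
    have h1 := abs_lt.1 (abs_lt_of_sq_lt_four_mul ha hb hab hv hw h)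
    have h2 := abs_lt.1 (abs_lt_of_sq_lt_four_mul hb ha (by rw [mul_comm, hab]) hv hw h)
    exact ⟨by linarith, by linarith, by linarith, h⟩

/-- The preimage comes from `5(v + w) = 2x + y + z`, `x = v + w - u` and `y - z = (2φ - 1)(w - v)`,
where `(2φ - 1)² = 5`. -/
lemma B_mulVec_surjective : Function.Surjective B.mulVec := by
  intro x
  refine ⟨![(2 * x 0 + x 1 + x 2) / 5 - x 0,
    ((2 * x 0 + x 1 + x 2) - (2 * phi - 1) * (x 1 - x 2)) / 10,
    ((2 * x 0 + x 1 + x 2) + (2 * phi - 1) * (x 1 - x 2)) / 10], ?_⟩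
  rw [B_mulVec]
  ext i
  fin_cases i <;> simp only [Matrix.cons_val, Fin.zero_eta, Fin.mk_one, Fin.reduceFinMk]
  · ring
  · linear_combination (2 * (x 1 - x 2) / 5) * phi_sq
  · linear_combination (-2 * (x 1 - x 2) / 5) * phi_sq

lemma B_image_Q0 : B.mulVec '' Q0 = Q := by
  have h : Q0 = B.mulVec ⁻¹' Q := Set.ext fun u => (B_mulVec_mem_Q_iff u).symm
  rw [h, Set.image_preimage_eq _ B_mulVec_surjective]

/-- The relation `M B = B D` with `D = diag(cd, c², d²)`, `c = ξ - φ`, `d = ξ + φ - 1`. -/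
lemma M_mulVec_B_mulVec (ξ : ℝ) (u : Fin 3 → ℝ) :
    (M ξ (-ξ) (2 - ξ)).mulVec (B.mulVec u) =
      B.mulVec ![(ξ - phi) * (ξ + phi - 1) * u 0, (ξ - phi) ^ 2 * u 1,
        (ξ + phi - 1) ^ 2 * u 2] := by
  rw [B_mulVec, B_mulVec]
  ext i
  fin_cases i <;>
    simp [M, Matrix.mulVec, dotProduct, Fin.sum_univ_three] <;>
    grind [phi_sq]

lemma diag_image_Q0 {c d : ℝ} (hc : c ≠ 0) (hd : d ≠ 0) :
    (fun u : Fin 3 → ℝ => ![c * d * u 0, c ^ 2 * u 1, d ^ 2 * u 2]) '' Q0 = Q0 := by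
  have key : ∀ {c d : ℝ}, c ≠ 0 → d ≠ 0 → ∀ u ∈ Q0,
      ![c * d * u 0, c ^ 2 * u 1, d ^ 2 * u 2] ∈ Q0 := by
    rintro c d hc hd u ⟨hv, hw, h⟩
    simp only [Q0, Set.mem_ofPred_eq, Matrix.cons_val]
    refine ⟨by positivity, by positivity, ?_⟩
    have hcd : 0 < (c * d) ^ 2 := by positivity
    nlinarith [mul_lt_mul_of_pos_left h hcd]
  refine Set.Subset.antisymm (Set.image_subset_iff.2 (key hc hd)) fun u hu => ?_
  refine ⟨_, key (inv_ne_zero hc) (inv_ne_zero hd) u hu, ?_⟩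
  ext i
  fin_cases i <;> simp <;> field_simp

lemma M_image_Q {ξ : ℝ} (h1 : ξ ≠ -phi⁻¹) (h2 : ξ ≠ phi) :
    (M ξ (-ξ) (2 - ξ)).mulVec '' Q = Q := by
  have hc : ξ - phi ≠ 0 := sub_ne_zero.2 h2
  have hd : ξ + phi - 1 ≠ 0 := by
    intro h
    apply h1
    rw [phi_inv]
    linarith
  calc (M ξ (-ξ) (2 - ξ)).mulVec '' Q
      = (M ξ (-ξ) (2 - ξ)).mulVec '' (B.mulVec '' Q0) := by rw [B_image_Q0]
    _ = B.mulVec '' ((fun u : Fin 3 → ℝ => ![(ξ - phi) * (ξ + phi - 1) * u 0,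
          (ξ - phi) ^ 2 * u 1, (ξ + phi - 1) ^ 2 * u 2]) '' Q0) := by
        rw [Set.image_image, Set.image_image]
        exact Set.image_congr fun u _ => M_mulVec_B_mulVec ξ u
    _ = Q := by rw [diag_image_Q0 hc hd, B_image_Q0]

theorem B_maps_cone_and_M_preserves_cone :
    (∀ u : Fin 3 → ℝ,
        (B.mulVec u 0) ^ 2 + (B.mulVec u 1) ^ 2 + (B.mulVec u 2) ^ 2 -
            2 * (B.mulVec u 0 * B.mulVec u 1 + B.mulVec u 1 * B.mulVec u 2 +
              B.mulVec u 2 * B.mulVec u 0) =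
          5 * ((u 0) ^ 2 - 4 * (u 1 * u 2))) ∧
      (∀ u : Fin 3 → ℝ, B.mulVec u ∈ Q ↔ u ∈ Q0) ∧
      B.mulVec '' Q0 = Q ∧
      (∀ ξ : ℝ, ξ ≠ -phi⁻¹ → ξ ≠ phi →
        (M ξ (-ξ) (2 - ξ)).mulVec '' Q = Q) := by
  exact ⟨B_identity, B_mulVec_mem_Q_iff, B_image_Q0, fun _ h1 h2 => M_image_Q h1 h2⟩
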